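/- Let a > 0, let n be a positive integer, and let φ : ℝ → ℝ be an n-kink. Then there exists a constant c > 0 such that lim_{r→+∞} r·exp(√2·r)·( n·π − φ(r) ) = c, i.e. φ(r) behaves as n·π − (c/r)·exp(−√2·r) as r → +∞. -/

import Mathlib

open Real Filter

/-!
For `ψ = nπ - φ`, again a solution of the equation, the energy `ψ'² / 2 - sin² ψ` increases on
`(-∞, 0]` and decreases on `[0, ∞)`, where it tends to a nonnegative limit. Hence it is nonnegative
on `[0, ∞)` and to the right of every zero of `ψ`; wherever it is nonnegative, uniqueness for the
Cauchy problem forbids `ψ' = 0`. Since `ψ` is positive near `-∞` and cannot reach its limit `0` at a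
finite point, it is eventually positive and decreasing. Nonnegativity of the energy then gives
`ψ' ≤ -ψ` near infinity, so `ψ` decays exponentially.

With `S = √(r² + a²)`, the function `u = S ψ` satisfies `u'' = (2 + q) u`, where
`q = sin (2ψ) / ψ - 2 + a² / S⁴` lies in `[0, r⁻²]` for large `r` because `S² ψ → 0`. The
integrability of `r⁻²` forces `exp (√2 r) u` to decrease to a positive limit.
-/

open Asymptotics Set
open scoped Topology

section Calculus

variable {f f' : ℝ → ℝ} {k R C : ℝ}

lemma monotoneOn_of_hasDerivAt_nonneg {D : Set ℝ} (hD : Convex ℝ D)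
    (hf : ∀ x ∈ D, HasDerivAt f (f' x) x) (hf' : ∀ x ∈ D, 0 ≤ f' x) : MonotoneOn f D :=
  monotoneOn_of_hasDerivWithinAt_nonneg hD
    (fun x hx => (hf x hx).continuousAt.continuousWithinAt)
    (fun x hx => (hf x (interior_subset hx)).hasDerivWithinAt)
    (fun x hx => hf' x (interior_subset hx))

lemma antitoneOn_of_hasDerivAt_nonpos {D : Set ℝ} (hD : Convex ℝ D)
    (hf : ∀ x ∈ D, HasDerivAt f (f' x) x) (hf' : ∀ x ∈ D, f' x ≤ 0) : AntitoneOn f D :=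
  antitoneOn_of_hasDerivWithinAt_nonpos hD
    (fun x hx => (hf x hx).continuousAt.continuousWithinAt)
    (fun x hx => (hf x (interior_subset hx)).hasDerivWithinAt)
    (fun x hx => hf' x (interior_subset hx))

lemma hasDerivAt_exp_const_mul (b r : ℝ) :
    HasDerivAt (fun r => exp (b * r)) (b * exp (b * r)) r := by
  simpa [mul_comm] using ((hasDerivAt_id r).const_mul b).exp

lemma exists_tendsto_atTop_of_antitoneOn_Ici (hf : AntitoneOn f (Ici R))
    (hC : ∀ r ∈ Ici R, C ≤ f r) : ∃ c, C ≤ c ∧ Tendsto f atTop (𝓝 c) := by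
  have hmax : ∀ r, max R r ∈ Ici R := le_max_left R
  have hanti : Antitone fun r => f (max R r) := fun r s hrs =>
    hf (hmax r) (hmax s) (max_le_max le_rfl hrs)
  have hbdd : BddBelow (range fun r => f (max R r)) :=
    ⟨C, forall_mem_range.2 fun r => hC _ (hmax r)⟩
  refine ⟨_, le_ciInf fun r => hC _ (hmax r), (tendsto_atTop_ciInf hanti hbdd).congr' ?_⟩
  filter_upwards [eventually_ge_atTop R] with r hr
  rw [max_eq_right hr]

lemma nonpos_of_mul_le_deriv_of_le (hk : 0 < k) (hf : ∀ r ∈ Ici R, HasDerivAt f (f' r) r)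
    (hf' : ∀ r ∈ Ici R, k * f r ≤ f' r) (hC : ∀ r ∈ Ici R, f r ≤ C) :
    ∀ r ∈ Ici R, f r ≤ 0 := by
  intro r hr
  have hmono : MonotoneOn (fun s => exp (-k * s) * f s) (Ici R) :=
    monotoneOn_of_hasDerivAt_nonneg (convex_Ici R)
      (fun s hs => (hasDerivAt_exp_const_mul (-k) s).mul (hf s hs))
      (fun s hs => by nlinarith [mul_le_mul_of_nonneg_left (hf' s hs) (exp_pos (-k * s)).le])
  have hlim : Tendsto (fun s => exp (-k * s) * C) atTop (𝓝 0) := by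
    simpa using (tendsto_exp_atBot.comp
      (tendsto_id.const_mul_atTop_of_neg (neg_lt_zero.2 hk))).mul_const C
  have hle : exp (-k * r) * f r ≤ 0 := by
    refine ge_of_tendsto hlim ?_
    filter_upwards [eventually_ge_atTop r] with s hs
    have hsR : s ∈ Ici R := hr.trans hs
    exact (hmono hr hsR hs).trans (mul_le_mul_of_nonneg_left (hC s hsR) (exp_pos _).le)
  exact nonpos_of_mul_nonpos_right hle (exp_pos _)

lemma deriv_nonpos_of_monotoneOn_of_bddAbove (hf : ∀ r ∈ Ici R, HasDerivAt f (f' r) r)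
    (hf' : MonotoneOn f' (Ici R)) (hbdd : BddAbove (f '' Ici R)) :
    ∀ r ∈ Ici R, f' r ≤ 0 := by
  intro r hr
  by_contra! hpos
  obtain ⟨C, hC⟩ := hbdd
  have hsub : Ici r ⊆ Ici R := Ici_subset_Ici.2 hr
  have hmono : MonotoneOn (fun s => f s - f' r * s) (Ici r) :=
    monotoneOn_of_hasDerivAt_nonneg (f' := fun s => f' s - f' r) (convex_Ici r)
      (fun s hs => ((hf s (hsub hs)).sub ((hasDerivAt_id s).const_mul (f' r))).congr_deriv
        (by rw [mul_one]))
      (fun s hs => sub_nonneg.2 (hf' hr (hsub hs) hs))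
  have hlim : Tendsto (fun s => f r - f' r * r + f' r * s) atTop atTop :=
    tendsto_atTop_add_const_left _ _ (tendsto_id.const_mul_atTop hpos)
  obtain ⟨s, hs, hrs⟩ := ((hlim.eventually_gt_atTop C).and (eventually_ge_atTop r)).exists
  have hle : f r - f' r * r ≤ f s - f' r * s := hmono self_mem_Ici hrs hrs
  linarith [hC (mem_image_of_mem f (hsub hrs))]

lemma isBigO_exp_neg_mul_of_deriv_le_neg_mul (hf : ∀ r ∈ Ici R, HasDerivAt f (f' r) r)
    (hnonneg : ∀ r ∈ Ici R, 0 ≤ f r) (hf' : ∀ r ∈ Ici R, f' r ≤ -(k * f r)) :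
    f =O[atTop] fun r => exp (-(k * r)) := by
  have hanti : AntitoneOn (fun r => exp (k * r) * f r) (Ici R) :=
    antitoneOn_of_hasDerivAt_nonpos (convex_Ici R)
      (fun r hr => (hasDerivAt_exp_const_mul k r).mul (hf r hr))
      (fun r hr => by nlinarith [mul_le_mul_of_nonneg_left (hf' r hr) (exp_pos (k * r)).le])
  refine IsBigO.of_bound (exp (k * R) * f R) ?_
  filter_upwards [eventually_ge_atTop R] with r hr
  rw [norm_of_nonneg (hnonneg r hr), norm_of_nonneg (exp_pos _).le, exp_neg, ← div_eq_mul_inv,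
    le_div_iff₀' (exp_pos _)]
  exact hanti self_mem_Ici hr hr

end Calculus

section RecessiveSolution

/-- The recessive (bounded, positive) solutions on `[R, ∞)` of a perturbation
`u'' = (k² + q) u` of `u'' = k² u`, where `0 ≤ q ≤ ε`. The functions `u'` and `u''` are the
derivatives of `u`, and the coefficient `q` is eliminated in favour of two-sided bounds on `u''`. -/
structure IsRecessiveSolution (k R : ℝ) (ε u u' u'' : ℝ → ℝ) : Prop where
  hasDerivAt : ∀ r ∈ Ici R, HasDerivAt u (u' r) r
  hasDerivAt_deriv : ∀ r ∈ Ici R, HasDerivAt u' (u'' r) r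
  pos : ∀ r ∈ Ici R, 0 < u r
  bddAbove : BddAbove (u '' Ici R)
  sq_mul_le : ∀ r ∈ Ici R, k ^ 2 * u r ≤ u'' r
  le_add_mul : ∀ r ∈ Ici R, u'' r ≤ (k ^ 2 + ε r) * u r

namespace IsRecessiveSolution

variable {k R : ℝ} {ε u u' u'' : ℝ → ℝ}

lemma monotoneOn_deriv (h : IsRecessiveSolution k R ε u u' u'') : MonotoneOn u' (Ici R) :=
  monotoneOn_of_hasDerivAt_nonneg (convex_Ici R) h.hasDerivAt_deriv fun r hr =>
    (mul_nonneg (sq_nonneg k) (h.pos r hr).le).trans (h.sq_mul_le r hr)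

lemma deriv_nonpos (h : IsRecessiveSolution k R ε u u' u'') : ∀ r ∈ Ici R, u' r ≤ 0 :=
  deriv_nonpos_of_monotoneOn_of_bddAbove h.hasDerivAt h.monotoneOn_deriv h.bddAbove

lemma perturbation_nonneg (h : IsRecessiveSolution k R ε u u' u'') : ∀ r ∈ Ici R, 0 ≤ ε r := by
  intro r hr
  have hle : k ^ 2 * u r ≤ (k ^ 2 + ε r) * u r := (h.sq_mul_le r hr).trans (h.le_add_mul r hr)
  linarith [le_of_mul_le_mul_right hle (h.pos r hr)]

lemma deriv_add_mul_nonpos (h : IsRecessiveSolution k R ε u u' u'') (hk : 0 < k) :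
    ∀ r ∈ Ici R, u' r + k * u r ≤ 0 := by
  obtain ⟨C, hC⟩ := h.bddAbove
  refine nonpos_of_mul_le_deriv_of_le (C := k * C) hk
    (fun r hr => (h.hasDerivAt_deriv r hr).add ((h.hasDerivAt r hr).const_mul k))
    (fun r hr => by linarith [h.sq_mul_le r hr]) (fun r hr => ?_)
  have hkC : k * u r ≤ k * C := mul_le_mul_of_nonneg_left (hC (mem_image_of_mem u hr)) hk.le
  linarith [h.deriv_nonpos r hr]

lemma neg_deriv_le (h : IsRecessiveSolution k R ε u u' u'') (hk : 0 < k)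
    (hε : AntitoneOn ε (Ici R)) : ∀ r ∈ Ici R, -u' r ≤ (k + ε r / (2 * k)) * u r := by
  intro r hr
  -- `κ` bounds the largest local decay rate `√(k² + ε r)` on `[r, ∞)`.
  set κ := k + ε r / (2 * k) with hκ
  have hsub : Ici r ⊆ Ici R := Ici_subset_Ici.2 hr
  have hεr : 0 ≤ ε r := h.perturbation_nonneg r hr
  have hκ0 : 0 ≤ κ := by positivity
  have hκk : k * κ = k ^ 2 + ε r / 2 := by rw [hκ]; field_simp
  suffices ∀ s ∈ Ici r, -u' s - κ * u s ≤ 0 from sub_nonpos.1 (this r self_mem_Ici)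
  refine nonpos_of_mul_le_deriv_of_le (C := -u' r) hk
    (fun s hs => ((h.hasDerivAt_deriv s (hsub hs)).neg).sub
      ((h.hasDerivAt s (hsub hs)).const_mul κ)) (fun s hs => ?_) (fun s hs => ?_)
  · have hu : 0 < u s := h.pos s (hsub hs)
    have hupper : u'' s ≤ (k ^ 2 + ε r) * u s := (h.le_add_mul s (hsub hs)).trans <| by
      gcongr
      exact hε hr (hsub hs) hs
    have hfirst : 0 ≤ (κ - k) * -(u' s + k * u s) :=
      mul_nonneg (by rw [hκ, add_sub_cancel_left]; positivity)
        (neg_nonneg.2 (h.deriv_add_mul_nonpos hk s (hsub hs)))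
    linear_combination hupper + hfirst - 2 * u s * hκk
  · have hmono : u' r ≤ u' s := h.monotoneOn_deriv hr (hsub hs) hs
    have := mul_nonneg hκ0 (h.pos s (hsub hs)).le
    linarith

lemma antitoneOn_exp_mul (h : IsRecessiveSolution k R ε u u' u'') (hk : 0 < k) :
    AntitoneOn (fun r => exp (k * r) * u r) (Ici R) :=
  antitoneOn_of_hasDerivAt_nonpos (convex_Ici R)
    (fun r hr => (hasDerivAt_exp_const_mul k r).mul (h.hasDerivAt r hr))
    (fun r hr => by
      nlinarith [mul_nonpos_of_nonneg_of_nonpos (exp_pos (k * r)).le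
        (h.deriv_add_mul_nonpos hk r hr)])

lemma monotoneOn_exp_add_mul (h : IsRecessiveSolution k R ε u u' u'') (hk : 0 < k)
    (hε : AntitoneOn ε (Ici R)) {P : ℝ → ℝ} (hP : ∀ r ∈ Ici R, HasDerivAt P (ε r) r) :
    MonotoneOn (fun r => exp (k * r + P r / (2 * k)) * u r) (Ici R) := by
  refine monotoneOn_of_hasDerivAt_nonneg (convex_Ici R)
    (fun r hr => ((((hasDerivAt_id r).const_mul k).add
      ((hP r hr).div_const (2 * k))).exp.mul (h.hasDerivAt r hr))) (fun r hr => ?_)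
  have := mul_nonneg (exp_pos (k * r + P r / (2 * k))).le
    (sub_nonneg.2 (h.neg_deriv_le hk hε r hr))
  simp only [id, Pi.add_apply, mul_one]
  linarith

theorem exists_tendsto_exp_mul (h : IsRecessiveSolution k R ε u u' u'') (hk : 0 < k)
    (hε : AntitoneOn ε (Ici R)) {P : ℝ → ℝ} (hP : ∀ r ∈ Ici R, HasDerivAt P (ε r) r)
    (hbdd : BddAbove (P '' Ici R)) :
    ∃ c, 0 < c ∧ Tendsto (fun r => exp (k * r) * u r) atTop (𝓝 c) := by
  obtain ⟨B, hB⟩ := hbdd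
  have hlower : ∀ r ∈ Ici R,
      exp (k * R + P R / (2 * k)) * u R / exp (B / (2 * k)) ≤ exp (k * r) * u r := by
    intro r hr
    rw [div_le_iff₀ (exp_pos _)]
    calc exp (k * R + P R / (2 * k)) * u R
        ≤ exp (k * r + P r / (2 * k)) * u r :=
          h.monotoneOn_exp_add_mul hk hε hP self_mem_Ici hr hr
      _ ≤ exp (k * r + B / (2 * k)) * u r := by
          have := (h.pos r hr).le
          gcongr
          exact hB (mem_image_of_mem P hr)
      _ = exp (k * r) * u r * exp (B / (2 * k)) := by rw [exp_add]; ring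
  obtain ⟨c, hc, hlim⟩ := exists_tendsto_atTop_of_antitoneOn_Ici (h.antitoneOn_exp_mul hk) hlower
  have := h.pos R self_mem_Ici
  exact ⟨c, hc.trans_lt' (by positivity), hlim⟩

end IsRecessiveSolution

end RecessiveSolution

section ArealRadius

/-- The areal radius `√(r² + a²)` of the wormhole with throat radius `a`; multiplication by it
removes the first-order term of the kink equation. -/
noncomputable def arealRadius (a r : ℝ) : ℝ := √(r ^ 2 + a ^ 2)

variable {a : ℝ}

lemma sq_arealRadius (a r : ℝ) : arealRadius a r ^ 2 = r ^ 2 + a ^ 2 :=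
  sq_sqrt (by positivity)

lemma le_arealRadius (a r : ℝ) : r ≤ arealRadius a r :=
  le_sqrt_of_sq_le (le_add_of_nonneg_right (sq_nonneg a))

lemma arealRadius_pos (ha : 0 < a) (r : ℝ) : 0 < arealRadius a r :=
  sqrt_pos.2 (by positivity)

lemma hasDerivAt_arealRadius (ha : 0 < a) (r : ℝ) :
    HasDerivAt (arealRadius a) (r / arealRadius a r) r := by
  have hsq : HasDerivAt (fun r : ℝ => r ^ 2 + a ^ 2) (2 * r) r := by
    simpa using (hasDerivAt_pow 2 r).add_const (a ^ 2)
  exact (hsq.sqrt (by positivity)).congr_deriv (mul_div_mul_left _ _ two_ne_zero)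

lemma tendsto_div_arealRadius (a : ℝ) :
    Tendsto (fun r => r / arealRadius a r) atTop (𝓝 1) := by
  have hinv : Tendsto (fun r : ℝ => (√(1 + (a / r) ^ 2))⁻¹) atTop (𝓝 1) := by
    have hdiv : Tendsto (fun r : ℝ => a / r) atTop (𝓝 0) := tendsto_const_nhds.div_atTop tendsto_id
    simpa using (((hdiv.pow 2).const_add 1).sqrt).inv₀ (by simp)
  refine hinv.congr' ?_
  filter_upwards [eventually_gt_atTop 0] with r hr
  have hfactor : arealRadius a r = r * √(1 + (a / r) ^ 2) := by
    have hsq : r ^ 2 + a ^ 2 = r ^ 2 * (1 + (a / r) ^ 2) := by field_simp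
    rw [arealRadius, hsq, sqrt_mul (sq_nonneg r), sqrt_sq hr.le]
  rw [hfactor, div_mul_cancel_left₀ hr.ne']

end ArealRadius

section Wormhole

/-- The energy `φ'² / 2 - sin² φ` of the conservative part `φ'' = sin (2φ)` of the kink equation,
as a function of `r`. -/
noncomputable def kinkEnergy (φ φ' : ℝ → ℝ) (r : ℝ) : ℝ := φ' r ^ 2 / 2 - sin (φ r) ^ 2

/-- `φ`, with derivative `φ'`, solves the kink equation
`φ'' + (2r / (r² + a²)) φ' = sin (2φ)` on the wormhole with throat radius `a`. -/
structure IsWormholeSolution (a : ℝ) (φ φ' : ℝ → ℝ) : Prop where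
  hasDerivAt : ∀ r, HasDerivAt φ (φ' r) r
  hasDerivAt_deriv : ∀ r,
    HasDerivAt φ' (sin (2 * φ r) - 2 * r / (r ^ 2 + a ^ 2) * φ' r) r

lemma abs_two_mul_div_sq_add_sq_le {a : ℝ} (ha : 0 < a) (r : ℝ) :
    |2 * r / (r ^ 2 + a ^ 2)| ≤ 1 / a := by
  have hden : 0 < r ^ 2 + a ^ 2 := by positivity
  rw [abs_div, abs_of_pos hden, div_le_div_iff₀ hden ha, abs_mul, abs_two]
  nlinarith [sq_nonneg (|r| - a), sq_abs r]

/-- The right-hand side of the kink equation, as a first-order system for `(φ, φ')`. -/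
noncomputable def wormholeField (a r : ℝ) (p : ℝ × ℝ) : ℝ × ℝ :=
  (p.2, sin (2 * p.1) - 2 * r / (r ^ 2 + a ^ 2) * p.2)

lemma lipschitzWith_wormholeField {a : ℝ} (ha : 0 < a) (r : ℝ) :
    LipschitzWith (2 + 1 / a).toNNReal (wormholeField a r) := by
  refine LipschitzWith.of_dist_le_mul fun p q => ?_
  rw [coe_toNNReal _ (by positivity)]
  set b := 2 * r / (r ^ 2 + a ^ 2)
  have hfst : |p.1 - q.1| ≤ dist p q := le_max_left _ _
  have hsnd : |p.2 - q.2| ≤ dist p q := le_max_right _ _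
  have hsin : |sin (2 * p.1) - sin (2 * q.1)| ≤ 2 * dist p q :=
    calc |sin (2 * p.1) - sin (2 * q.1)| ≤ |2 * p.1 - 2 * q.1| := by
          simpa [dist_eq] using lipschitzWith_sin.dist_le_mul (2 * p.1) (2 * q.1)
      _ = 2 * |p.1 - q.1| := by rw [← mul_sub, abs_mul, abs_two]
      _ ≤ 2 * dist p q := by gcongr
  have hdamp : |b * p.2 - b * q.2| ≤ 1 / a * dist p q := by
    rw [← mul_sub, abs_mul]
    exact mul_le_mul (abs_two_mul_div_sq_add_sq_le ha r) hsnd (abs_nonneg _) (by positivity)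
  refine max_le ?_ ?_
  · have hconst : 1 ≤ 2 + 1 / a := by linarith [one_div_pos.2 ha]
    exact hsnd.trans (le_mul_of_one_le_left dist_nonneg hconst)
  · calc |sin (2 * p.1) - b * p.2 - (sin (2 * q.1) - b * q.2)|
        = |sin (2 * p.1) - sin (2 * q.1) - (b * p.2 - b * q.2)| := by congr 1; ring
      _ ≤ |sin (2 * p.1) - sin (2 * q.1)| + |b * p.2 - b * q.2| := abs_sub _ _
      _ ≤ (2 + 1 / a) * dist p q := by linarith

namespace IsWormholeSolution

variable {a r s : ℝ} {φ φ' χ χ' ψ ψ' : ℝ → ℝ}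

lemma continuous (h : IsWormholeSolution a φ φ') : Continuous φ :=
  continuous_iff_continuousAt.2 fun r => (h.hasDerivAt r).continuousAt

lemma int_mul_pi_sub (h : IsWormholeSolution a φ φ') (m : ℤ) :
    IsWormholeSolution a (fun r => m * π - φ r) (fun r => -φ' r) where
  hasDerivAt r := (h.hasDerivAt r).const_sub _
  hasDerivAt_deriv r := by
    refine (h.hasDerivAt_deriv r).neg.congr_deriv ?_
    rw [show 2 * (m * π - φ r) = m * (2 * π) - 2 * φ r by ring, sin_int_mul_two_pi_sub]
    ring

lemma const {x : ℝ} (hx : sin x = 0) : IsWormholeSolution a (fun _ => x) (fun _ => 0) where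
  hasDerivAt r := hasDerivAt_const r x
  hasDerivAt_deriv r := (hasDerivAt_const r 0).congr_deriv (by simp [sin_two_mul, hx])

lemma eq_of_eq_of_deriv_eq (hφ : IsWormholeSolution a φ φ') (hχ : IsWormholeSolution a χ χ')
    (ha : 0 < a) (heq : φ s = χ s) (heq' : φ' s = χ' s) : φ = χ := by
  have hpair : (fun r => (φ r, φ' r)) = fun r => (χ r, χ' r) :=
    ODE_solution_unique_univ (v := wormholeField a) (s := fun _ => univ)
      (fun r => (lipschitzWith_wormholeField ha r).lipschitzOnWith)
      (fun r => ⟨(hφ.hasDerivAt r).prodMk (hφ.hasDerivAt_deriv r), mem_univ _⟩)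
      (fun r => ⟨(hχ.hasDerivAt r).prodMk (hχ.hasDerivAt_deriv r), mem_univ _⟩)
      (Prod.ext heq heq')
  exact funext fun r => congrArg Prod.fst (congrFun hpair r)

lemma hasDerivAt_kinkEnergy (h : IsWormholeSolution a φ φ') (r : ℝ) :
    HasDerivAt (kinkEnergy φ φ') (-(2 * r / (r ^ 2 + a ^ 2) * φ' r ^ 2)) r := by
  refine ((((h.hasDerivAt_deriv r).pow 2).div_const 2).sub
    ((h.hasDerivAt r).sin.pow 2)).congr_deriv ?_
  rw [sin_two_mul]
  push_cast
  ring

lemma antitoneOn_kinkEnergy (h : IsWormholeSolution a φ φ') :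
    AntitoneOn (kinkEnergy φ φ') (Ici 0) :=
  antitoneOn_of_hasDerivAt_nonpos (convex_Ici 0) (fun r _ => h.hasDerivAt_kinkEnergy r)
    (fun r hr => neg_nonpos.2 (by have : 0 ≤ r := hr; positivity))

lemma monotoneOn_kinkEnergy (h : IsWormholeSolution a φ φ') :
    MonotoneOn (kinkEnergy φ φ') (Iic 0) :=
  monotoneOn_of_hasDerivAt_nonneg (convex_Iic 0) (fun r _ => h.hasDerivAt_kinkEnergy r)
    (fun r hr => neg_nonneg.2 (mul_nonpos_of_nonpos_of_nonneg
      (div_nonpos_of_nonpos_of_nonneg (by linarith [mem_Iic.1 hr]) (by positivity))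
      (sq_nonneg _)))

lemma kinkEnergy_nonneg (h : IsWormholeSolution a ψ ψ') (hlim : Tendsto ψ atTop (𝓝 0))
    (hr : 0 ≤ r) : 0 ≤ kinkEnergy ψ ψ' r := by
  have hsin : Tendsto (fun s => -sin (ψ s) ^ 2) atTop (𝓝 0) := by
    simpa using (((continuous_sin.tendsto 0).comp hlim).pow 2).neg
  refine le_of_tendsto hsin ?_
  filter_upwards [eventually_ge_atTop r] with s hs
  calc -sin (ψ s) ^ 2 ≤ kinkEnergy ψ ψ' s := by
        rw [kinkEnergy]
        linarith [sq_nonneg (ψ' s)]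
    _ ≤ kinkEnergy ψ ψ' r := h.antitoneOn_kinkEnergy hr (hr.trans hs) hs

lemma kinkEnergy_nonneg_of_le (h : IsWormholeSolution a ψ ψ') (hlim : Tendsto ψ atTop (𝓝 0))
    (hs : 0 ≤ kinkEnergy ψ ψ' s) (hsr : s ≤ r) : 0 ≤ kinkEnergy ψ ψ' r := by
  rcases le_total 0 r with hr | hr
  · exact h.kinkEnergy_nonneg hlim hr
  · exact hs.trans (h.monotoneOn_kinkEnergy (hsr.trans hr) hr hsr)

lemma deriv_ne_zero (h : IsWormholeSolution a ψ ψ') (ha : 0 < a)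
    (hlim : Tendsto ψ atTop (𝓝 0)) (hψ : ψ ≠ 0) (hr : 0 ≤ kinkEnergy ψ ψ' r) : ψ' r ≠ 0 := by
  intro hr0
  have hsin : sin (ψ r) = 0 := by
    rw [kinkEnergy, hr0] at hr
    exact pow_eq_zero_iff two_ne_zero |>.1 (le_antisymm (by linarith) (sq_nonneg _))
  have hconst : ψ = fun _ => ψ r := h.eq_of_eq_of_deriv_eq (const hsin) ha rfl hr0
  rw [hconst] at hlim
  have hzero : ψ r = 0 := tendsto_nhds_unique tendsto_const_nhds hlim
  exact hψ (hconst.trans (funext fun _ => hzero))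

lemma deriv_neg_and_pos_or_deriv_pos_and_neg (h : IsWormholeSolution a ψ ψ') (ha : 0 < a)
    (hlim : Tendsto ψ atTop (𝓝 0)) (hψ : ψ ≠ 0) (hs : 0 ≤ kinkEnergy ψ ψ' s) :
    (ψ' s < 0 ∧ 0 < ψ s) ∨ (0 < ψ' s ∧ ψ s < 0) := by
  have hcont : ContinuousOn ψ (Ici s) := h.continuous.continuousOn
  have hderiv : ∀ r ∈ interior (Ici s), HasDerivWithinAt ψ (ψ' r) (interior (Ici s)) r :=
    fun r _ => (h.hasDerivAt r).hasDerivWithinAt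
  have hs1 : s + 1 ∈ Ici s := (lt_add_one s).le
  rcases hasDerivWithinAt_forall_lt_or_forall_gt_of_forall_ne (convex_Ici s)
      (fun r _ => (h.hasDerivAt r).hasDerivWithinAt)
      (fun r hr => h.deriv_ne_zero ha hlim hψ (h.kinkEnergy_nonneg_of_le hlim hs hr))
    with hneg | hpos
  · have hanti : StrictAntiOn ψ (Ici s) := strictAntiOn_of_hasDerivWithinAt_neg (convex_Ici s)
      hcont hderiv fun r hr => hneg r (interior_subset hr)
    refine .inl ⟨hneg s self_mem_Ici, ?_⟩
    refine (le_of_tendsto hlim ?_).trans_lt (hanti self_mem_Ici hs1 (lt_add_one s))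
    filter_upwards [eventually_ge_atTop (s + 1)] with r hr
    exact hanti.antitoneOn hs1 (hs1.trans hr) hr
  · have hmono : StrictMonoOn ψ (Ici s) := strictMonoOn_of_hasDerivWithinAt_pos (convex_Ici s)
      hcont hderiv fun r hr => hpos r (interior_subset hr)
    refine .inr ⟨hpos s self_mem_Ici, ?_⟩
    refine (hmono self_mem_Ici hs1 (lt_add_one s)).trans_le (ge_of_tendsto hlim ?_)
    filter_upwards [eventually_ge_atTop (s + 1)] with r hr
    exact hmono.monotoneOn hs1 (hs1.trans hr) hr

lemma pos_of_le (h : IsWormholeSolution a ψ ψ') (ha : 0 < a) (hlim : Tendsto ψ atTop (𝓝 0))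
    (hs : 0 < ψ s) (hsr : s ≤ r) : 0 < ψ r := by
  by_contra! hr
  obtain ⟨t, -, ht⟩ : (0 : ℝ) ∈ ψ '' Icc s r :=
    intermediate_value_Icc' hsr h.continuous.continuousOn ⟨hr, hs.le⟩
  have henergy : 0 ≤ kinkEnergy ψ ψ' t := by
    rw [kinkEnergy, ht, sin_zero, zero_pow two_ne_zero, sub_zero]
    positivity
  rcases h.deriv_neg_and_pos_or_deriv_pos_and_neg ha hlim (ne_of_apply_ne (· s) hs.ne') henergy
    with ⟨-, hpos⟩ | ⟨-, hneg⟩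
  · exact hpos.ne' ht
  · exact hneg.ne ht

lemma deriv_neg (h : IsWormholeSolution a ψ ψ') (ha : 0 < a) (hlim : Tendsto ψ atTop (𝓝 0))
    (hr : 0 ≤ r) (hpos : 0 < ψ r) : ψ' r < 0 := by
  rcases h.deriv_neg_and_pos_or_deriv_pos_and_neg ha hlim (ne_of_apply_ne (· r) hpos.ne')
    (h.kinkEnergy_nonneg hlim hr) with ⟨hderiv, -⟩ | ⟨-, hneg⟩
  · exact hderiv
  · exact absurd hneg hpos.le.not_gt

lemma deriv_le_neg (h : IsWormholeSolution a ψ ψ') (ha : 0 < a) (hlim : Tendsto ψ atTop (𝓝 0))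
    (hr : 0 ≤ r) (hpos : 0 < ψ r) (hle : ψ r ≤ 1) : ψ' r ≤ -ψ r := by
  have hsin : 3 / 4 * ψ r ≤ sin (ψ r) := by
    have hcube : ψ r ^ 3 ≤ ψ r := pow_le_of_le_one hpos.le hle three_ne_zero
    linarith [sin_gt_sub_cube hpos]
  have hsq : (3 / 4 * ψ r) ^ 2 ≤ sin (ψ r) ^ 2 := pow_le_pow_left₀ (by positivity) hsin 2
  have henergy : 0 ≤ ψ' r ^ 2 / 2 - sin (ψ r) ^ 2 := h.kinkEnergy_nonneg hlim hr
  have hderiv : ψ r ^ 2 ≤ (-ψ' r) ^ 2 := by nlinarith [sq_nonneg (ψ r)]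
  linarith [le_of_sq_le_sq hderiv (neg_nonneg.2 (h.deriv_neg ha hlim hr hpos).le)]

lemma isBigO_exp_neg (h : IsWormholeSolution a ψ ψ') (ha : 0 < a)
    (hlim : Tendsto ψ atTop (𝓝 0)) (hs : 0 < ψ s) : ψ =O[atTop] fun r => exp (-r) := by
  obtain ⟨R, hR⟩ := eventually_atTop.1 ((hlim.eventually_le_const one_pos).and
    ((eventually_ge_atTop s).and (eventually_ge_atTop 0)))
  have hpos : ∀ r ∈ Ici R, 0 < ψ r := fun r hr => h.pos_of_le ha hlim hs (hR r hr).2.1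
  have hderiv : ∀ r ∈ Ici R, ψ' r ≤ -(1 * ψ r) := fun r hr => by
    simpa using h.deriv_le_neg ha hlim (hR r hr).2.2 (hpos r hr) (hR r hr).1
  simpa using isBigO_exp_neg_mul_of_deriv_le_neg_mul (fun r _ => h.hasDerivAt r)
    (fun r hr => (hpos r hr).le) hderiv

lemma tendsto_sq_arealRadius_mul (h : IsWormholeSolution a ψ ψ') (ha : 0 < a)
    (hlim : Tendsto ψ atTop (𝓝 0)) (hs : 0 < ψ s) :
    Tendsto (fun r => arealRadius a r ^ 2 * ψ r) atTop (𝓝 0) := by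
  have hexp : Tendsto (fun r => arealRadius a r ^ 2 * exp (-r)) atTop (𝓝 0) := by
    simpa [sq_arealRadius, add_mul] using (tendsto_pow_mul_exp_neg_atTop_nhds_zero 2).add
      (tendsto_exp_neg_atTop_nhds_zero.const_mul (a ^ 2))
  exact ((isBigO_refl _ _).mul (h.isBigO_exp_neg ha hlim hs)).trans_tendsto hexp

lemma hasDerivAt_arealRadius_mul (h : IsWormholeSolution a ψ ψ') (ha : 0 < a) (r : ℝ) :
    HasDerivAt (fun r => arealRadius a r * ψ r)
      (r / arealRadius a r * ψ r + arealRadius a r * ψ' r) r :=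
  (hasDerivAt_arealRadius ha r).mul (h.hasDerivAt r)

lemma hasDerivAt_deriv_arealRadius_mul (h : IsWormholeSolution a ψ ψ') (ha : 0 < a) (r : ℝ) :
    HasDerivAt (fun r => r / arealRadius a r * ψ r + arealRadius a r * ψ' r)
      (arealRadius a r * sin (2 * ψ r) + a ^ 2 / arealRadius a r ^ 3 * ψ r) r := by
  have hS := hasDerivAt_arealRadius ha r
  have hS0 := (arealRadius_pos ha r).ne'
  refine ((((hasDerivAt_id r).div hS hS0).mul (h.hasDerivAt r)).add
    (hS.mul (h.hasDerivAt_deriv r))).congr_deriv ?_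
  have ha2 : a ^ 2 = arealRadius a r ^ 2 - r ^ 2 := by rw [sq_arealRadius]; ring
  rw [← sq_arealRadius, ha2]
  simp only [id, Pi.div_apply]
  field_simp
  ring

end IsWormholeSolution

lemma two_mul_le_mul_sin_add {x S a : ℝ} (hx : 0 < x) (hS : 0 < S) (hxS : S ^ 2 * x ≤ a / 2) :
    2 * (S * x) ≤ S * sin (2 * x) + a ^ 2 / S ^ 3 * x := by
  have hsq : S ^ 4 * x ^ 2 ≤ a ^ 2 / 4 := by
    nlinarith [pow_le_pow_left₀ (by positivity) hxS 2]
  have hcube : S * (2 * x ^ 3) ≤ a ^ 2 / S ^ 3 * x := by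
    rw [div_mul_eq_mul_div, le_div_iff₀ (by positivity)]
    nlinarith
  have hsin : S * (2 * x - (2 * x) ^ 3 / 6) ≤ S * sin (2 * x) :=
    mul_le_mul_of_nonneg_left (sin_gt_sub_cube (by positivity)).le hS.le
  have : 0 < S * x ^ 3 := by positivity
  linarith

lemma mul_sin_add_le_two_add_inv_sq_mul {x a r : ℝ} (hx : 0 ≤ x) (hr : 0 < r) :
    arealRadius a r * sin (2 * x) + a ^ 2 / arealRadius a r ^ 3 * x
      ≤ (2 + (r ^ 2)⁻¹) * (arealRadius a r * x) := by
  have hS : 0 < arealRadius a r := hr.trans_le (le_arealRadius a r)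
  have hsin : arealRadius a r * sin (2 * x) ≤ arealRadius a r * (2 * x) :=
    mul_le_mul_of_nonneg_left (sin_le (by positivity)) hS.le
  have hcoeff : a ^ 2 / arealRadius a r ^ 4 ≤ (r ^ 2)⁻¹ := by
    rw [← one_div, div_le_div_iff₀ (by positivity) (by positivity),
      show arealRadius a r ^ 4 = (arealRadius a r ^ 2) ^ 2 by ring, sq_arealRadius]
    nlinarith [mul_nonneg (sq_nonneg a) (sq_nonneg r), sq_nonneg (r ^ 2), sq_nonneg (a ^ 2)]
  have hpert : a ^ 2 / arealRadius a r ^ 3 * x ≤ (r ^ 2)⁻¹ * (arealRadius a r * x) :=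
    calc a ^ 2 / arealRadius a r ^ 3 * x
        = a ^ 2 / arealRadius a r ^ 4 * (arealRadius a r * x) := by field_simp
      _ ≤ (r ^ 2)⁻¹ * (arealRadius a r * x) := by gcongr
  linarith

namespace IsWormholeSolution

variable {a s : ℝ} {ψ ψ' : ℝ → ℝ}

theorem exists_isRecessiveSolution_arealRadius_mul (h : IsWormholeSolution a ψ ψ') (ha : 0 < a)
    (hlim : Tendsto ψ atTop (𝓝 0)) (hs : 0 < ψ s) :
    ∃ R, 0 < R ∧ IsRecessiveSolution (√2) R (fun r => (r ^ 2)⁻¹) (fun r => arealRadius a r * ψ r)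
      (fun r => r / arealRadius a r * ψ r + arealRadius a r * ψ' r)
      (fun r => arealRadius a r * sin (2 * ψ r) + a ^ 2 / arealRadius a r ^ 3 * ψ r) := by
  have hsmall := (h.tendsto_sq_arealRadius_mul ha hlim hs).eventually_le_const (half_pos ha)
  obtain ⟨R₀, hR₀⟩ := eventually_atTop.1 (hsmall.and (eventually_ge_atTop s))
  have hR : ∀ r ∈ Ici (max R₀ 1), arealRadius a r ^ 2 * ψ r ≤ a / 2 ∧ 0 < ψ r ∧ 1 ≤ r :=
    fun r hr =>
      have hr₀ := hR₀ r ((le_max_left _ _).trans hr)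
      ⟨hr₀.1, h.pos_of_le ha hlim hs hr₀.2, (le_max_right _ _).trans hr⟩
  refine ⟨max R₀ 1, by positivity,
    { hasDerivAt := fun r _ => h.hasDerivAt_arealRadius_mul ha r
      hasDerivAt_deriv := fun r _ => h.hasDerivAt_deriv_arealRadius_mul ha r
      pos := fun r hr => mul_pos (arealRadius_pos ha r) (hR r hr).2.1
      bddAbove := ⟨a / 2, forall_mem_image.2 fun r hr => ?_⟩
      sq_mul_le := fun r hr => ?_
      le_add_mul := fun r hr => ?_ }⟩ <;>
    obtain ⟨hle, hpos, hr1⟩ := hR r hr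
  · refine le_trans ?_ hle
    gcongr
    exact le_self_pow₀ (hr1.trans (le_arealRadius a r)) two_ne_zero
  · rw [sq_sqrt zero_le_two]
    exact two_mul_le_mul_sin_add hpos (arealRadius_pos ha r) hle
  · rw [sq_sqrt zero_le_two]
    exact mul_sin_add_le_two_add_inv_sq_mul hpos.le (one_pos.trans_le hr1)

theorem exists_tendsto_mul_exp_mul (h : IsWormholeSolution a ψ ψ') (ha : 0 < a)
    (hlim : Tendsto ψ atTop (𝓝 0)) (hs : 0 < ψ s) :
    ∃ c, 0 < c ∧ Tendsto (fun r => r * exp (√2 * r) * ψ r) atTop (𝓝 c) := by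
  obtain ⟨R, hR, hrec⟩ := h.exists_isRecessiveSolution_arealRadius_mul ha hlim hs
  have hpos : ∀ r ∈ Ici R, 0 < r := fun r hr => hR.trans_le hr
  have hanti : AntitoneOn (fun r : ℝ => (r ^ 2)⁻¹) (Ici R) := fun r hr t _ hrt => by
    have := hpos r hr
    dsimp only
    gcongr
  obtain ⟨c, hc, hlim_exp⟩ := hrec.exists_tendsto_exp_mul (by positivity) hanti
    (P := fun r => -r⁻¹)
    (fun r hr => (hasDerivAt_inv (hpos r hr).ne').neg.congr_deriv (neg_neg _))
    ⟨0, forall_mem_image.2 fun r hr => neg_nonpos.2 (inv_nonneg.2 (hpos r hr).le)⟩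
  refine ⟨c, hc, ?_⟩
  rw [← one_mul c]
  refine ((tendsto_div_arealRadius a).mul hlim_exp).congr fun r => ?_
  have := (arealRadius_pos ha r).ne'
  field_simp

end IsWormholeSolution

lemma isWormholeSolution_deriv {a : ℝ} {φ : ℝ → ℝ} (hφ : ContDiff ℝ 2 φ)
    (hφeq : ∀ r, deriv (deriv φ) r + 2 * r / (r ^ 2 + a ^ 2) * deriv φ r = sin (2 * φ r)) :
    IsWormholeSolution a φ (deriv φ) where
  hasDerivAt r := (hφ.differentiable two_ne_zero r).hasDerivAt
  hasDerivAt_deriv r := by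
    have hφ' : ContDiff ℝ (1 + 1) φ := by rwa [one_add_one_eq_two]
    exact ((contDiff_succ_iff_deriv.1 hφ').2.2.differentiable one_ne_zero r).hasDerivAt.congr_deriv
      (eq_sub_of_add_eq (hφeq r))

end Wormhole

theorem nkink_asymptotics_general {a : ℝ} (ha : 0 < a) {m : ℤ} {φ : ℝ → ℝ}
    (hφ : ContDiff ℝ 2 φ)
    (hφeq : ∀ r, deriv (deriv φ) r + 2 * r / (r ^ 2 + a ^ 2) * deriv φ r = sin (2 * φ r))
    {s : ℝ} (hs : φ s < m * π) (htop : Tendsto φ atTop (𝓝 (m * π))) :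
    ∃ c, 0 < c ∧ Tendsto (fun r => r * exp (√2 * r) * (m * π - φ r)) atTop (𝓝 c) :=
  ((isWormholeSolution_deriv hφ hφeq).int_mul_pi_sub m).exists_tendsto_mul_exp_mul ha
    (by simpa using htop.const_sub (m * π)) (sub_pos.2 hs)

/-- Asymptotics of the `n`-kink at `+∞`: there is `c > 0` with
`r·exp(√2·r)·(nπ − φ(r)) → c`, i.e. `φ(r) ≈ nπ − (c/r)·exp(−√2·r)`. -/
theorem nkink_asymptotics (a : ℝ) (ha : 0 < a) (n : ℕ) (hn : 0 < n)
    (φ : ℝ → ℝ)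
    (hφ : ContDiff ℝ 2 φ)
    (hφeq : ∀ r : ℝ, deriv (deriv φ) r + (2 * r / (r ^ 2 + a ^ 2)) * deriv φ r
        = Real.sin (2 * φ r))
    (hbot : Tendsto φ atBot (nhds 0))
    (htop : Tendsto φ atTop (nhds (n * Real.pi))) :
    ∃ c : ℝ, 0 < c ∧
      Tendsto (fun r : ℝ => r * Real.exp (Real.sqrt 2 * r) * (n * Real.pi - φ r))
        atTop (nhds c) := by
  obtain ⟨s, hs⟩ := (hbot.eventually_lt_const (show 0 < n * π by positivity)).exists
  exact_mod_cast nkink_asymptotics_general (m := n) ha hφ hφeq (mod_cast hs) (mod_cast htop)
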